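/- Let 1 ≤ p ≤ ∞, let v : ℝⁿ → (0,∞) be a continuous sub-multiplicative weight, let φ : ℝⁿ → (0,∞) be continuous, and let C₀ > 0. Then the following two conditions are equivalent: (1) φ(x+y) ≤ C₀ v(x) φ(y) for all x, y ∈ ℝⁿ (i.e. φ is v-moderate with constant C₀); (2) for all measurable functions f₁, f₂ : ℝⁿ → ℂ, the weighted Young inequality ‖(f₁ * f₂) φ‖_{L^p} ≤ C₀ ‖f₁ v‖_{L^1} ‖f₂ φ‖_{L^p} holds. -/

import Mathlib

open MeasureTheory
open scoped ENNReal

/-!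
If `φ` is `v`-moderate, then `|(f₁ ⋆ f₂) φ|` is dominated pointwise by `C₀ (|f₁ v| ⋆ |f₂ φ|)`, and
the unweighted inequality `‖g ⋆ h‖_p ≤ ‖g‖₁ ‖h‖_p` finishes. Conversely, test the weighted
inequality on the indicators of a small neighbourhood `A` of `x` and of an open set `B` near `y`
which is barely larger than a compact neighbourhood `K ⊆ B` of `y`. If `A` is so small that
`x + K - A ⊆ B`, then the convolution equals `μ A` on `x + K`; since `φ` and `v` are nearly constant
on the sets involved, `φ (x + y) (μ A) (μ K)^(1/p) ≤ C₀ (v x) (μ A) (φ y) (μ B)^(1/p)` up to a small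
error, and `μ B / μ K` is as close to `1` as we like. Outer regularity provides `B`, so the argument
works for the Haar measure of a locally compact abelian group.
-/

open Filter Set
open scoped NNReal Topology Convolution

section Young

theorem lintegral_rpow_le_measure_univ_rpow_mul {α : Type*} [MeasurableSpace α] {ν : Measure α}
    {h : α → ℝ≥0∞} (hh : AEMeasurable h ν) {q : ℝ} (hq : 1 ≤ q) :
    (∫⁻ y, h y ∂ν) ^ q ≤ ν univ ^ (q - 1) * ∫⁻ y, h y ^ q ∂ν := by
  have hq0 : 0 < q := zero_lt_one.trans_le hq
  have hoelder : ∫⁻ y, h y ∂ν ≤ ν univ ^ (1 - q⁻¹) * (∫⁻ y, h y ^ q ∂ν) ^ q⁻¹ := by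
    simpa [ENNReal.rpow_rpow_inv hq0.ne'] using
      ENNReal.lintegral_mul_norm_pow_le (μ := ν) (f := fun _ => 1) aemeasurable_const
        (hh.pow_const q) (sub_nonneg.2 (inv_le_one_of_one_le₀ hq)) (inv_nonneg.2 hq0.le)
        (sub_add_cancel 1 q⁻¹)
  calc (∫⁻ y, h y ∂ν) ^ q
      ≤ (ν univ ^ (1 - q⁻¹) * (∫⁻ y, h y ^ q ∂ν) ^ q⁻¹) ^ q := by gcongr
    _ = ν univ ^ (q - 1) * ∫⁻ y, h y ^ q ∂ν := by
      rw [ENNReal.mul_rpow_of_nonneg _ _ hq0.le, ENNReal.rpow_inv_rpow hq0.ne', ← ENNReal.rpow_mul,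
        sub_mul, one_mul, inv_mul_cancel₀ hq0.ne']

variable {G : Type*} [AddGroup G] [MeasurableSpace G] [MeasurableAdd₂ G] [MeasurableNeg G]
  {μ ν : Measure G} [SFinite μ] [SFinite ν] [μ.IsAddRightInvariant] {h : G → ℝ≥0∞}

theorem lintegral_lintegral_sub_eq_measure_univ_mul (hh : Measurable h) :
    ∫⁻ x, ∫⁻ y, h (x - y) ∂ν ∂μ = ν univ * ∫⁻ x, h x ∂μ := by
  rw [lintegral_lintegral_swap (by fun_prop)]
  simp_rw [lintegral_sub_right_eq_self h]
  rw [lintegral_const, mul_comm]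

theorem lintegral_lintegral_sub_rpow_le (hh : Measurable h) {q : ℝ} (hq : 1 ≤ q) :
    ∫⁻ x, (∫⁻ y, h (x - y) ∂ν) ^ q ∂μ ≤ ν univ ^ q * ∫⁻ x, h x ^ q ∂μ := by
  have hint : Measurable fun x => ∫⁻ y, h (x - y) ^ q ∂ν :=
    Measurable.lintegral_prod_right' (f := fun z : G × G => h (z.1 - z.2) ^ q) (by fun_prop)
  calc ∫⁻ x, (∫⁻ y, h (x - y) ∂ν) ^ q ∂μ
      ≤ ∫⁻ x, ν univ ^ (q - 1) * ∫⁻ y, h (x - y) ^ q ∂ν ∂μ :=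
        lintegral_mono fun x => lintegral_rpow_le_measure_univ_rpow_mul (by fun_prop) hq
    _ = ν univ ^ (q - 1) * (ν univ * ∫⁻ x, h x ^ q ∂μ) := by
        rw [lintegral_const_mul _ hint,
          lintegral_lintegral_sub_eq_measure_univ_mul (hh.pow_const q)]
    _ = ν univ ^ q * ∫⁻ x, h x ^ q ∂μ := by
        have hpow : ν univ ^ (q - 1) * ν univ = ν univ ^ q := by
          simpa using
            (ENNReal.rpow_add_of_nonneg (x := ν univ) _ _ (sub_nonneg.2 hq) zero_le_one).symm
        rw [← mul_assoc, hpow]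

theorem eLpNormEssSup_lintegral_sub_le (hh : Measurable h) :
    eLpNormEssSup (fun x => ∫⁻ y, h (x - y) ∂ν) μ ≤ ν univ * eLpNormEssSup h μ := by
  have hbound : ∀ᵐ x ∂μ, ∀ᵐ y ∂ν, h (x - y) ≤ eLpNormEssSup h μ := by
    have hset : MeasurableSet {z : G × G | h (z.1 - z.2) ≤ eLpNormEssSup h μ} :=
      measurableSet_le (by fun_prop) measurable_const
    rw [Measure.ae_ae_comm hset]
    exact .of_forall fun y =>
      (measurePreserving_sub_right μ y).quasiMeasurePreserving.ae ae_le_eLpNormEssSup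
  refine eLpNormEssSup_le_of_ae_enorm_bound (hbound.mono fun x hx => ?_)
  calc ∫⁻ y, h (x - y) ∂ν ≤ ∫⁻ _, eLpNormEssSup h μ ∂ν := lintegral_mono_ae hx
    _ = ν univ * eLpNormEssSup h μ := by rw [lintegral_const, mul_comm]

theorem eLpNorm_lintegral_sub_le (hh : Measurable h) {p : ℝ≥0∞} (hp : 1 ≤ p) :
    eLpNorm (fun x => ∫⁻ y, h (x - y) ∂ν) p μ ≤ ν univ * eLpNorm h p μ := by
  obtain rfl | hp_top := eq_or_ne p ∞
  · simpa only [eLpNorm_exponent_top] using eLpNormEssSup_lintegral_sub_le hh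
  have hp0 : p ≠ 0 := (zero_lt_one.trans_le hp).ne'
  have hq : 1 ≤ p.toReal := by
    simpa using ENNReal.toReal_mono hp_top hp
  have hq0 : 0 < p.toReal := zero_lt_one.trans_le hq
  simp only [eLpNorm_eq_lintegral_rpow_enorm_toReal hp0 hp_top, enorm_eq_self, one_div]
  rw [ENNReal.rpow_inv_le_iff hq0, ENNReal.mul_rpow_of_nonneg _ _ hq0.le,
    ENNReal.rpow_inv_rpow hq0.ne']
  exact lintegral_lintegral_sub_rpow_le hh hq

end Young

section Indicator

variable {α E : Type*} [MeasurableSpace α] {μ : Measure α} [ENorm E] {s : Set α}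
  {p : ℝ≥0∞}

/-- For `p = ∞` the exponent is `1 / 0 = 0`, which is what the essential supremum requires. -/
theorem mul_measure_rpow_le_eLpNorm {f : α → E} {c : ℝ≥0∞} (hs : MeasurableSet s) (hμs : μ s ≠ 0)
    (hp : p ≠ 0) (hc : ∀ x ∈ s, c ≤ ‖f x‖ₑ) : c * μ s ^ (1 / p.toReal) ≤ eLpNorm f p μ := by
  rw [← enorm_eq_self c, ← eLpNorm_indicator_const' hs hμs hp]
  refine eLpNorm_mono_enorm fun x => ?_
  by_cases hx : x ∈ s
  · simpa [hx] using hc x hx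
  · simp [hx]

theorem eLpNorm_indicator_one_mul_le {𝕜 : Type*} [NormedRing 𝕜] {w : α → 𝕜} {c : ℝ≥0}
    (hc : ∀ x ∈ s, ‖w x‖₊ ≤ c) :
    eLpNorm (fun x => s.indicator 1 x * w x) p μ ≤ c * μ s ^ (1 / p.toReal) := by
  refine (eLpNorm_mono_enorm (g := s.indicator fun _ => (c : ℝ≥0∞)) fun x => ?_).trans
    (eLpNorm_indicator_const_le (c : ℝ≥0∞) p)
  by_cases hx : x ∈ s
  · simpa [hx, enorm_le_coe] using hc x hx
  · simp [hx]

end Indicator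

section Neighborhoods

variable {X : Type*} [TopologicalSpace X] [MeasurableSpace X] {μ : Measure X} [μ.IsOpenPosMeasure]
  {x : X} {s : Set X}

theorem exists_isOpen_subset_measure_ne_zero_ne_top [IsLocallyFiniteMeasure μ] (hs : s ∈ 𝓝 x) :
    ∃ A ⊆ s, IsOpen A ∧ μ A ≠ 0 ∧ μ A ≠ ∞ := by
  obtain ⟨O, hxO, hO, hμO⟩ := μ.exists_isOpen_measure_lt_top x
  refine ⟨interior s ∩ O, inter_subset_left.trans interior_subset, isOpen_interior.inter hO, ?_,
    measure_ne_top_of_subset inter_subset_right hμO.ne⟩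
  exact (isOpen_interior.inter hO).measure_ne_zero μ ⟨x, mem_interior_iff_mem_nhds.2 hs, hxO⟩

theorem exists_isCompact_isOpen_measure_le_mul [R1Space X] [WeaklyLocallyCompactSpace X]
    [μ.OuterRegular] [IsFiniteMeasureOnCompacts μ] (hs : s ∈ 𝓝 x) {c : ℝ≥0∞} (hc : 1 < c) :
    ∃ K B : Set X, K ∈ 𝓝 x ∧ IsCompact K ∧ IsClosed K ∧ IsOpen B ∧ K ⊆ B ∧ B ⊆ s ∧
      μ B ≤ c * μ K := by
  obtain ⟨K, ⟨hKx, hK, hKc⟩, hKs⟩ :=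
    (isCompact_isClosed_basis_nhds x).mem_iff.1 (interior_mem_nhds.2 hs)
  have hlt : μ K < c * μ K := by
    simpa using ENNReal.mul_lt_mul_left (μ.measure_pos_of_mem_nhds hKx).ne' hK.measure_ne_top hc
  obtain ⟨O, hKO, hO, hμO⟩ := K.exists_isOpen_lt_of_lt _ hlt
  exact ⟨K, O ∩ interior s, hKx, hK, hKc, hO.inter isOpen_interior, subset_inter hKO hKs,
    inter_subset_right.trans interior_subset, (measure_mono inter_subset_left).trans hμO.le⟩

variable {G : Type*} [AddCommGroup G] [TopologicalSpace G] [IsTopologicalAddGroup G]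

theorem eventually_forall_add_sub_mem_of_isCompact {K B : Set G} (hK : IsCompact K) (hB : IsOpen B)
    (hKB : K ⊆ B) (x : G) : ∀ᶠ a in 𝓝 x, ∀ k ∈ K, x + k - a ∈ B := by
  refine hK.eventually_forall_of_forall_eventually fun k hk => ?_
  have hcont : Continuous fun z : G × G => x + z.2 - z.1 := by fun_prop
  exact hcont.continuousAt.eventually_mem (hB.mem_nhds (by simpa using hKB hk))

end Neighborhoods

section WeightedYoung

variable {G 𝕜 : Type*} [AddCommGroup G] [RCLike 𝕜]

/-- `φ` is `v`-moderate with constant `C`. Weights are allowed to take values in `𝕜`; only their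
norms matter. -/
def IsModerateWith (C : ℝ≥0) (v φ : G → 𝕜) : Prop :=
  ∀ x y, ‖φ (x + y)‖₊ ≤ C * ‖v x‖₊ * ‖φ y‖₊

/-- The Young inequality `L¹(v) ⋆ L^p(φ) ⊆ L^p(φ)` with constant `C` for the weights `v` and `φ`.
The functions need not be integrable: where the convolution integral diverges, `⋆` is `0`. -/
def WeightedYoung [MeasurableSpace G] (p : ℝ≥0∞) (μ : Measure G) (C : ℝ≥0) (v φ : G → 𝕜) : Prop :=
  ∀ f₁ f₂ : G → 𝕜, Measurable f₁ → Measurable f₂ →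
    eLpNorm (fun x => (f₁ ⋆[ContinuousLinearMap.mul 𝕜 𝕜, μ] f₂) x * φ x) p μ ≤
      C * eLpNorm (fun x => f₁ x * v x) 1 μ * eLpNorm (fun x => f₂ x * φ x) p μ

theorem isModerateWith_ofReal_iff {C : ℝ} (hC : 0 ≤ C) {v φ : G → ℝ} (hv : ∀ x, 0 ≤ v x)
    (hφ : ∀ x, 0 ≤ φ x) :
    IsModerateWith C.toNNReal (fun x => (v x : 𝕜)) (fun x => (φ x : 𝕜)) ↔
      ∀ x y, φ (x + y) ≤ C * v x * φ y := by
  simp only [IsModerateWith, ← NNReal.coe_le_coe, NNReal.coe_mul, coe_nnnorm,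
    Real.coe_toNNReal C hC, RCLike.norm_of_nonneg (hv _), RCLike.norm_of_nonneg (hφ _)]

variable [MeasurableSpace G] {μ : Measure G} {p : ℝ≥0∞} {C : ℝ≥0} {v φ : G → 𝕜}

theorem IsModerateWith.enorm_convolution_mul_le (h : IsModerateWith C v φ) (f₁ f₂ : G → 𝕜)
    (x : G) :
    ‖(f₁ ⋆[ContinuousLinearMap.mul 𝕜 𝕜, μ] f₂) x * φ x‖ₑ ≤
      ∫⁻ t, C * ‖f₁ t * v t‖ₑ * ‖f₂ (x - t) * φ (x - t)‖ₑ ∂μ := by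
  have hφ (t : G) : ‖φ x‖ₑ ≤ C * ‖v t‖ₑ * ‖φ (x - t)‖ₑ := by
    simpa [enorm_eq_nnnorm, ← ENNReal.coe_mul] using h t (x - t)
  calc ‖(f₁ ⋆[ContinuousLinearMap.mul 𝕜 𝕜, μ] f₂) x * φ x‖ₑ
      = ‖∫ t, f₁ t * f₂ (x - t) * φ x ∂μ‖ₑ := by
        rw [convolution_def, integral_mul_const]
        rfl
    _ ≤ ∫⁻ t, ‖f₁ t * f₂ (x - t) * φ x‖ₑ ∂μ := enorm_integral_le_lintegral_enorm _
    _ ≤ ∫⁻ t, C * ‖f₁ t * v t‖ₑ * ‖f₂ (x - t) * φ (x - t)‖ₑ ∂μ := by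
        refine lintegral_mono fun t => ?_
        calc ‖f₁ t * f₂ (x - t) * φ x‖ₑ
            ≤ ‖f₁ t‖ₑ * ‖f₂ (x - t)‖ₑ * (C * ‖v t‖ₑ * ‖φ (x - t)‖ₑ) := by
              rw [enorm_mul, enorm_mul]
              gcongr
              exact hφ t
          _ = C * ‖f₁ t * v t‖ₑ * ‖f₂ (x - t) * φ (x - t)‖ₑ := by
              rw [enorm_mul, enorm_mul]
              ring

theorem IsModerateWith.weightedYoung [MeasurableAdd₂ G] [MeasurableNeg G] [SFinite μ]
    [μ.IsAddRightInvariant] (h : IsModerateWith C v φ) (hp : 1 ≤ p) (hv : Measurable v)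
    (hφ : Measurable φ) : WeightedYoung p μ C v φ := by
  intro f₁ f₂ hf₁ hf₂
  let ν : Measure G := μ.withDensity fun t => C * ‖f₁ t * v t‖ₑ
  have hν : ν univ = C * eLpNorm (fun x => f₁ x * v x) 1 μ := by
    rw [withDensity_apply _ .univ, setLIntegral_univ, lintegral_const_mul _ (by fun_prop),
      eLpNorm_one_eq_lintegral_enorm]
  calc eLpNorm (fun x => (f₁ ⋆[ContinuousLinearMap.mul 𝕜 𝕜, μ] f₂) x * φ x) p μ
      ≤ eLpNorm (fun x => ∫⁻ t, ‖f₂ (x - t) * φ (x - t)‖ₑ ∂ν) p μ := by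
        refine eLpNorm_mono_enorm fun x => ?_
        rw [enorm_eq_self, lintegral_withDensity_eq_lintegral_mul _ (by fun_prop) (by fun_prop)]
        exact h.enorm_convolution_mul_le f₁ f₂ x
    _ ≤ ν univ * eLpNorm (fun x => ‖f₂ x * φ x‖ₑ) p μ :=
        eLpNorm_lintegral_sub_le (h := fun x => ‖f₂ x * φ x‖ₑ) (by fun_prop) hp
    _ = C * eLpNorm (fun x => f₁ x * v x) 1 μ * eLpNorm (fun x => f₂ x * φ x) p μ := by
        rw [hν, eLpNorm_enorm]

theorem convolution_indicator_one_of_forall_sub_mem {A B : Set G} (hA : MeasurableSet A) {z : G}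
    (hz : ∀ t ∈ A, z - t ∈ B) :
    (A.indicator 1 ⋆[ContinuousLinearMap.mul 𝕜 𝕜, μ] B.indicator 1) z = (μ.real A : 𝕜) := by
  have hint (t : G) : ContinuousLinearMap.mul 𝕜 𝕜 (A.indicator 1 t) (B.indicator 1 (z - t)) =
      A.indicator (fun _ => 1) t := by
    by_cases ht : t ∈ A
    · simp [ht, hz t ht]
    · simp [ht]
  simp_rw [convolution_def, hint]
  rw [integral_indicator_const _ hA, RCLike.real_smul_eq_coe_mul, mul_one]

theorem WeightedYoung.mul_measure_rpow_le (h : WeightedYoung p μ C v φ) (hp : p ≠ 0)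
    {A B S : Set G} (hA : MeasurableSet A) (hB : MeasurableSet B) (hS : MeasurableSet S)
    (hA0 : μ A ≠ 0) (hA_top : μ A ≠ ∞) (hS0 : μ S ≠ 0) (hSAB : ∀ z ∈ S, ∀ t ∈ A, z - t ∈ B)
    {m V M : ℝ≥0} (hm : ∀ z ∈ S, m ≤ ‖φ z‖₊) (hV : ∀ t ∈ A, ‖v t‖₊ ≤ V)
    (hM : ∀ z ∈ B, ‖φ z‖₊ ≤ M) :
    m * μ S ^ (1 / p.toReal) ≤ C * V * M * μ B ^ (1 / p.toReal) := by
  have hlower (z : G) (hz : z ∈ S) : μ A * m ≤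
      ‖(A.indicator 1 ⋆[ContinuousLinearMap.mul 𝕜 𝕜, μ] B.indicator 1) z * φ z‖ₑ := by
    rw [convolution_indicator_one_of_forall_sub_mem hA (hSAB z hz), enorm_mul,
      ← ofReal_norm, RCLike.norm_of_nonneg measureReal_nonneg, ofReal_measureReal hA_top]
    gcongr
    exact ENNReal.coe_le_coe.2 (hm z hz)
  rw [← ENNReal.mul_le_mul_iff_right hA0 hA_top]
  calc μ A * (m * μ S ^ (1 / p.toReal))
      = μ A * m * μ S ^ (1 / p.toReal) := (mul_assoc _ _ _).symm
    _ ≤ _ := mul_measure_rpow_le_eLpNorm hS hS0 hp hlower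
    _ ≤ _ := h _ _ (measurable_one.indicator hA) (measurable_one.indicator hB)
    _ ≤ C * (V * μ A ^ (1 / (1 : ℝ≥0∞).toReal)) * (M * μ B ^ (1 / p.toReal)) := by
        gcongr
        exacts [eLpNorm_indicator_one_mul_le hV, eLpNorm_indicator_one_mul_le hM]
    _ = μ A * (C * V * M * μ B ^ (1 / p.toReal)) := by
        rw [ENNReal.toReal_one, div_one, ENNReal.rpow_one]
        ring

section LocallyCompact

variable [TopologicalSpace G] [IsTopologicalAddGroup G] [LocallyCompactSpace G] [BorelSpace G]
  [μ.IsAddHaarMeasure] [μ.OuterRegular]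

theorem WeightedYoung.le_mul_rpow_of_eventually_le (h : WeightedYoung p μ C v φ) (hp : p ≠ 0)
    {x y : G} {m V M c : ℝ≥0} (hm : ∀ᶠ z in 𝓝 (x + y), m ≤ ‖φ z‖₊)
    (hV : ∀ᶠ t in 𝓝 x, ‖v t‖₊ ≤ V) (hM : ∀ᶠ z in 𝓝 y, ‖φ z‖₊ ≤ M) (hc : 1 < c) :
    m ≤ C * V * M * c ^ (1 / p.toReal) := by
  have hm' : ∀ᶠ z in 𝓝 y, m ≤ ‖φ (x + z)‖₊ := (continuous_const_add x).continuousAt.eventually hm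
  obtain ⟨K, B, hKy, hK, hK_closed, hB, hKB, hBs, hμB⟩ :=
    exists_isCompact_isOpen_measure_le_mul (μ := μ) (hM.and hm') (c := c) (mod_cast hc)
  obtain ⟨A, hAs, hA, hA0, hA_top⟩ := exists_isOpen_subset_measure_ne_zero_ne_top (μ := μ)
    (hV.and (eventually_forall_add_sub_mem_of_isCompact hK hB hKB x))
  let S : Set G := (-x + ·) ⁻¹' K
  have hμS : μ S = μ K := measure_preimage_add μ (-x) K
  have hK0 : μ K ≠ 0 := (μ.measure_pos_of_mem_nhds hKy).ne'
  have hr : 0 ≤ 1 / p.toReal := by positivity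
  have hsets : m * μ S ^ (1 / p.toReal) ≤ C * V * M * μ B ^ (1 / p.toReal) :=
    h.mul_measure_rpow_le hp hA.measurableSet hB.measurableSet
      (hK_closed.measurableSet.preimage (measurable_const_add _)) hA0 hA_top (hμS ▸ hK0)
      (fun z hz t ht => by simpa using (hAs ht).2 _ hz)
      (fun z hz => by simpa using (hBs (hKB hz)).2)
      (fun t ht => (hAs ht).1) (fun z hz => (hBs hz).1)
  have hcancel : m * μ K ^ (1 / p.toReal) ≤
      C * V * M * (c : ℝ≥0∞) ^ (1 / p.toReal) * μ K ^ (1 / p.toReal) :=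
    calc m * μ K ^ (1 / p.toReal) ≤ C * V * M * μ B ^ (1 / p.toReal) := hμS ▸ hsets
      _ ≤ C * V * M * (c * μ K) ^ (1 / p.toReal) := by gcongr
      _ = C * V * M * (c : ℝ≥0∞) ^ (1 / p.toReal) * μ K ^ (1 / p.toReal) := by
        rw [ENNReal.mul_rpow_of_nonneg _ _ hr, ← mul_assoc]
  rw [ENNReal.mul_le_mul_iff_left (ENNReal.rpow_pos hK0.bot_lt hK.measure_ne_top).ne'
    (ENNReal.rpow_ne_top_of_nonneg hr hK.measure_ne_top),
    ← ENNReal.coe_rpow_of_nonneg _ hr] at hcancel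
  exact_mod_cast hcancel

theorem WeightedYoung.isModerateWith (h : WeightedYoung p μ C v φ) (hp : p ≠ 0)
    (hv : Continuous v) (hφ : Continuous φ) : IsModerateWith C v φ := by
  intro x y
  have hr : 0 ≤ 1 / p.toReal := by positivity
  let bound (d : ℝ≥0) : ℝ≥0 := C * (‖v x‖₊ + d) * (‖φ y‖₊ + d) * (1 + d) ^ (1 / p.toReal)
  have hle (d : ℝ≥0) (hd : 0 < d) : ‖φ (x + y)‖₊ - d ≤ bound d := by
    refine h.le_mul_rpow_of_eventually_le hp (x := x) (y := y) ?_ ?_ ?_ (lt_add_of_pos_right 1 hd)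
    · have hlt : ∀ᶠ z in 𝓝 (x + y), ‖φ (x + y)‖₊ < ‖φ z‖₊ + d :=
        (hφ.nnnorm.add continuous_const).continuousAt.eventually_const_lt
          (lt_add_of_pos_right _ hd)
      exact hlt.mono fun z hz => tsub_le_iff_right.2 hz.le
    · exact hv.nnnorm.continuousAt.eventually_le_const (lt_add_of_pos_right _ hd)
    · exact hφ.nnnorm.continuousAt.eventually_le_const (lt_add_of_pos_right _ hd)
  have hleft : Tendsto (fun d : ℝ≥0 => ‖φ (x + y)‖₊ - d) (𝓝[>] 0) (𝓝 ‖φ (x + y)‖₊) := by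
    have hcont : Continuous fun d : ℝ≥0 => ‖φ (x + y)‖₊ - d := by fun_prop
    simpa using (hcont.tendsto 0).mono_left nhdsWithin_le_nhds
  have hright : Tendsto bound (𝓝[>] 0) (𝓝 (C * ‖v x‖₊ * ‖φ y‖₊)) := by
    have hcont : Continuous bound := by
      have := NNReal.continuous_rpow_const hr
      fun_prop
    simpa [bound] using (hcont.tendsto 0).mono_left nhdsWithin_le_nhds
  exact le_of_tendsto_of_tendsto hleft hright (eventually_nhdsWithin_of_forall hle)

end LocallyCompact

theorem moderate_iff_weighted_young_general [TopologicalSpace G] [IsTopologicalAddGroup G]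
    [LocallyCompactSpace G] [SecondCountableTopology G] [BorelSpace G] [μ.IsAddHaarMeasure]
    (hp : 1 ≤ p) (hv : Continuous v) (hφ : Continuous φ) :
    IsModerateWith C v φ ↔ WeightedYoung p μ C v φ :=
  ⟨fun h => h.weightedYoung hp hv.measurable hφ.measurable,
    fun h => h.isModerateWith (zero_lt_one.trans_le hp).ne' hv hφ⟩

end WeightedYoung

/-- **Weighted Young inequality with two weights characterizes moderateness.**
Let `1 ≤ p ≤ ∞`, `v` a continuous sub-multiplicative weight, `φ` continuous positive,
`C₀ > 0`. Then `φ (x+y) ≤ C₀ v x φ y` for all `x, y` (i.e. `φ` is `v`-moderate with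
constant `C₀`) iff for all measurable `f₁ f₂ : ℝⁿ → ℂ` the weighted Young inequality
`‖(f₁ ⋆ f₂) φ‖_p ≤ C₀ ‖f₁ v‖_1 ‖f₂ φ‖_p` holds. -/
theorem moderate_iff_weighted_young
    (n : ℕ) (p : ℝ≥0∞) (hp : 1 ≤ p)
    (v : (Fin n → ℝ) → ℝ) (hv : Continuous v) (hvpos : ∀ x, 0 < v x)
    (hvsub : ∀ x y, v (x + y) ≤ v x * v y)
    (φ : (Fin n → ℝ) → ℝ) (hφ : Continuous φ) (hφpos : ∀ x, 0 < φ x)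
    (C₀ : ℝ) (hC₀ : 0 < C₀) :
    (∀ x y, φ (x + y) ≤ C₀ * v x * φ y) ↔
      (∀ f₁ f₂ : (Fin n → ℝ) → ℂ, Measurable f₁ → Measurable f₂ →
        eLpNorm
            (fun x =>
              (MeasureTheory.convolution f₁ f₂ (ContinuousLinearMap.mul ℂ ℂ) volume) x
                * (φ x : ℂ)) p volume ≤
          ENNReal.ofReal C₀ * eLpNorm (fun x => f₁ x * (v x : ℂ)) 1 volume *
            eLpNorm (fun x => f₂ x * (φ x : ℂ)) p volume) := by
  rw [← isModerateWith_ofReal_iff (𝕜 := ℂ) hC₀.le (fun x => (hvpos x).le) fun x => (hφpos x).le]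
  exact moderate_iff_weighted_young_general hp (by fun_prop) (by fun_prop)
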